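/- Let q be an odd prime power, ω a primitive element of F_{q²}, and set X = {x ∈ F_{q²} : Tr_{q²/q}(x) ∈ C_0^{(2,q)}}, X' = {xω : Tr_{q²/q}(x) ∈ C_0^{(2,q)}}, X_1 = X \ (X ∩ X'), X_2 = X' \ (X ∩ X'), X_3 = X ∩ X', X_4 = F_{q²} \ (X_1 ∪ X_2 ∪ X_3). Let τ = 0 if q ≡ 1 (mod 4) and τ = 1 if q ≡ 3 (mod 4), and define C_0 = {(x,xy) : x ∈ C_0^{(2,q²)}, y ∈ X_1} ∪ {(x,xy) : x ∈ C_1^{(2,q²)}, y ∈ X_2} ∪ {(0,x) : x ∈ C_τ^{(2,q²)}}, C_1 = {(x,xy) : x ∈ C_0^{(2,q²)}, y ∈ X_3} ∪ {(x,xy) : x ∈ C_1^{(2,q²)}, y ∈ X_4}, C_2 = {(x,xy) : x ∈ C_1^{(2,q²)}, y ∈ X_1} ∪ {(x,xy) : x ∈ C_0^{(2,q²)}, y ∈ X_2} ∪ {(0,x) : x ∈ C_{τ+1}^{(2,q²)}}, C_3 = {(x,xy) : x ∈ C_1^{(2,q²)}, y ∈ X_3} ∪ {(x,xy) : x ∈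 C_0^{(2,q²)}, y ∈ X_4}. Then each C_i (i = 0,1,2,3) is of type Q, the C_i are pairwise disjoint, and with K_y = {(x,xy) : x ∈ F_{q²}} for y ∈ F_{q²} and K_∞ = {(0,x) : x ∈ F_{q²}} one has C_0 ∪ C_2 ∪ {(0,0)} = (∪_{y ∈ X_1∪X_2} K_y) ∪ K_∞ and C_1 ∪ C_3 ∪ {(0,0)} = ∪_{y ∈ X_3∪X_4} K_y. -/

import Mathlib

noncomputable section

def zetaP (p : ℕ) : ℂ := Complex.exp (2 * Real.pi * Complex.I / p)

def psiL (p : ℕ) (L : Type) [Field L] [Fintype L] [CharP L p] (x : L) : ℂ :=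
  letI : Algebra (ZMod p) L := ZMod.algebra L p
  zetaP p ^ (Algebra.trace (ZMod p) L x).val

def psiSum (p : ℕ) (L : Type) [Field L] [Fintype L] [CharP L p]
    (a b : L) (E : Set (L × L)) : ℂ :=
  ∑ᶠ z ∈ E, psiL p L (a * z.1 + b * z.2)

def IsTypeQ (p q : ℕ) (L : Type) [Field L] [Fintype L] [CharP L p]
    (E : Set (L × L)) : Prop :=
  E.ncard = (q ^ 4 - 1) / 4 ∧
    ∀ a b : L, (a, b) ≠ ((0 : L), (0 : L)) →
      psiSum p L a b E = ((q : ℂ) ^ 2 - 1) / 4 ∨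
      psiSum p L a b E = (-3 * (q : ℂ) ^ 2 - 1) / 4

/-- the cyclotomic class `C_i^{(N,q²)} = ω^i⟨ω^N⟩`. -/
def cyc (L : Type) [Field L] (ω : L) (N i : ℕ) : Set L :=
  {x | ∃ k : ℕ, x = ω ^ i * (ω ^ N) ^ k}

def IsPrim (L : Type) [Field L] (ω : L) : Prop :=
  ∀ x : L, x ≠ 0 → ∃ n : ℕ, x = ω ^ n

/-- nonzero squares of `K` (the class `C₀^{(2,q)}`). -/
def sqSet (K : Type) [Field K] : Set K := {y | ∃ z : K, z ≠ 0 ∧ y = z ^ 2}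

/-!
Write `η_K`, `η` for the quadratic characters of `K = 𝔽_q` and `L = 𝔽_{q²}`, and `ψ` for the
canonical additive character of `L`. Each `C_i` is a union of half lines
`x • (1, y)` with `η(x) = ±1`, so its character sums reduce to the Gauss sum `G(η, ψ)` and to sums
of `η(y - c)` over the sets of slopes `y`, which are Boolean combinations of `X` and `X'`.

Everything then rests on two facts about the trace form. Elements of `Kˣ` are squares in `L`,
whereas a nonzero `y` with `Tr(y) = 0` has `η(y) = -η_K(-1)`. The second fact makes
`y ↦ (Tr(y a), Tr(y b))` a bijection `L → K × K` when `η(a) η(b) = -1`, so that `X` and `X'` behave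
as independent events. Together the two facts evaluate `∑ f(Tr(y)) η(y)` for every `f : K → ℂ`; this
gives both `G(η, ψ) = -η_K(-1) q` and the sums of `η(y - c)` over `X` and `X'`.
-/

/-- The complex-valued indicator function of a set. -/
local notation "𝟙[" A "]" => Set.indicator A fun _ => (1 : ℂ)

section Indicator

variable {α : Type*} (A B : Set α) (y : α)

theorem indicator_sdiff_add_indicator_sdiff :
    𝟙[A \ B] y + 𝟙[B \ A] y = 𝟙[A] y + 𝟙[B] y - 2 * (𝟙[A] y * 𝟙[B] y) := by
  by_cases hA : y ∈ A <;> by_cases hB : y ∈ B <;> simp [hA, hB]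
  norm_num

theorem indicator_sdiff_sub_indicator_sdiff :
    𝟙[A \ B] y - 𝟙[B \ A] y = 𝟙[A] y - 𝟙[B] y := by
  by_cases hA : y ∈ A <;> by_cases hB : y ∈ B <;> simp [hA, hB]

theorem indicator_inter_add_indicator_compl_union :
    𝟙[A ∩ B] y + 𝟙[(A ∪ B)ᶜ] y = 1 - 𝟙[A] y - 𝟙[B] y + 2 * (𝟙[A] y * 𝟙[B] y) := by
  by_cases hA : y ∈ A <;> by_cases hB : y ∈ B <;> simp [hA, hB]
  norm_num

theorem indicator_inter_sub_indicator_compl_union :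
    𝟙[A ∩ B] y - 𝟙[(A ∪ B)ᶜ] y = 𝟙[A] y + 𝟙[B] y - 1 := by
  by_cases hA : y ∈ A <;> by_cases hB : y ∈ B <;> simp [hA, hB]

theorem indicator_sdiff_add_mul_eq_one_or_neg_one {s : ℂ} (hs : s = 1 ∨ s = -1) :
    𝟙[A \ B] y + 𝟙[B \ A] y + s * (𝟙[A] y + 𝟙[B] y - 1) = 1 ∨
      𝟙[A \ B] y + 𝟙[B \ A] y + s * (𝟙[A] y + 𝟙[B] y - 1) = -1 := by
  rcases hs with rfl | rfl <;> by_cases hA : y ∈ A <;> by_cases hB : y ∈ B <;> simp [hA, hB]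

theorem indicator_inter_add_mul_eq_one_or_neg_one {s : ℂ} (hs : s = 1 ∨ s = -1) :
    𝟙[A ∩ B] y + 𝟙[(A ∪ B)ᶜ] y + s * (𝟙[A] y - 𝟙[B] y) = 1 ∨
      𝟙[A ∩ B] y + 𝟙[(A ∪ B)ᶜ] y + s * (𝟙[A] y - 𝟙[B] y) = -1 := by
  rcases hs with rfl | rfl <;> by_cases hA : y ∈ A <;> by_cases hB : y ∈ B <;> simp [hA, hB]

end Indicator

section QuadraticCharacter

variable {F : Type*} [Field F] [Fintype F]

open Classical in
/-- The quadratic character `η` of a finite field, with complex values so that it can be paired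
with complex additive characters. -/
def quadChar (F : Type*) [Field F] [Fintype F] : MulChar F ℂ :=
  (quadraticChar F).ringHomComp (Int.castRingHom ℂ)

/-- The nonzero elements on which `η` takes the value `t`: the nonzero squares for `t = 1`, the
nonsquares for `t = -1`, and no element at all for `t = 0`. -/
def quadClass (F : Type*) [Field F] [Fintype F] (t : ℂ) : Set F :=
  {x | x ≠ 0 ∧ quadChar F x = t}

theorem quadChar_dichotomy {x : F} (hx : x ≠ 0) : quadChar F x = 1 ∨ quadChar F x = -1 := by
  classical
  simp only [quadChar, MulChar.ringHomComp_apply, eq_intCast]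
  exact_mod_cast quadraticChar_dichotomy hx

theorem quadChar_eq_one_iff {x : F} (hx : x ≠ 0) : quadChar F x = 1 ↔ IsSquare x := by
  classical
  rw [← quadraticChar_one_iff_isSquare hx]
  simp only [quadChar, MulChar.ringHomComp_apply, eq_intCast]
  norm_cast

theorem quadChar_ne_one (hF : ringChar F ≠ 2) : quadChar F ≠ 1 := by
  classical
  exact (MulChar.ringHomComp_ne_one_iff (RingHom.injective_int _)).2 (quadraticChar_ne_one hF)

theorem quadChar_sq {x : F} (hx : x ≠ 0) : quadChar F x ^ 2 = 1 := by
  rcases quadChar_dichotomy hx with h | h <;> rw [h] <;> norm_num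

theorem quadChar_neg_one_sq (F : Type*) [Field F] [Fintype F] : quadChar F (-1) ^ 2 = 1 :=
  quadChar_sq (neg_ne_zero.2 one_ne_zero)

theorem neg_one_pow_eq_quadChar_neg_one (hF : ringChar F ≠ 2) :
    (-1 : ℂ) ^ (if Fintype.card F % 4 = 1 then 0 else 1) = quadChar F (-1) := by
  classical
  have hodd := FiniteField.odd_card_of_char_ne_two hF
  simp only [quadChar, MulChar.ringHomComp_apply, quadraticChar_neg_one hF]
  split_ifs with h
  · rw [ZMod.χ₄_nat_one_mod_four h, map_one, pow_zero]
  · rw [ZMod.χ₄_nat_three_mod_four (by omega), map_neg, map_one, pow_one]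

theorem quadChar_inv (x : F) : quadChar F x⁻¹ = quadChar F x := by
  rcases eq_or_ne x 0 with rfl | hx
  · rw [inv_zero]
  · have h : quadChar F x⁻¹ * quadChar F x = 1 := by rw [← map_mul, inv_mul_cancel₀ hx, map_one]
    rcases quadChar_dichotomy hx with hη | hη <;> rw [hη] at h ⊢
    · simpa only [mul_one] using h
    · linear_combination -h

theorem exists_quadChar_eq_neg_one (hF : ringChar F ≠ 2) : ∃ n : F, quadChar F n = -1 := by
  obtain ⟨u, hu⟩ := MulChar.ne_one_iff.1 (quadChar_ne_one hF)
  exact ⟨u, (quadChar_dichotomy u.ne_zero).resolve_left hu⟩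

theorem ne_zero_of_quadChar_eq_neg_one {n : F} (hn : quadChar F n = -1) : n ≠ 0 := by
  rintro rfl
  rw [MulChar.map_zero] at hn
  norm_num at hn

theorem ne_zero_of_quadChar_eq_one {x : F} (hx : quadChar F x = 1) : x ≠ 0 := by
  rintro rfl
  rw [MulChar.map_zero] at hx
  exact zero_ne_one hx

theorem zero_notMem_quadClass (t : ℂ) : (0 : F) ∉ quadClass F t := fun h => h.1 rfl

theorem quadClass_zero : quadClass F 0 = ∅ := by
  refine Set.eq_empty_of_forall_notMem fun x hx => ?_
  rcases quadChar_dichotomy hx.1 with h | h <;> rw [hx.2] at h <;> norm_num at h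

theorem disjoint_quadClass {t t' : ℂ} (h : t ≠ t') : Disjoint (quadClass F t) (quadClass F t') :=
  Set.disjoint_left.2 fun _ hx hx' => h (hx.2.symm.trans hx'.2)

theorem indicator_quadClass {t : ℂ} (ht : t ^ 3 = t) (x : F) :
    𝟙[quadClass F t] x = (t ^ 2 * quadChar F x ^ 2 + t * quadChar F x) / 2 := by
  classical
  have ht' : t = 0 ∨ t = 1 ∨ t = -1 := by
    have : t * ((t - 1) * (t + 1)) = 0 := by linear_combination ht
    simpa only [mul_eq_zero, sub_eq_zero, add_eq_zero_iff_eq_neg] using this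
  rw [Set.indicator_apply]
  rcases eq_or_ne x 0 with rfl | hx
  · rw [if_neg (zero_notMem_quadClass t), MulChar.map_zero]
    ring
  · rcases ht' with rfl | rfl | rfl <;> rcases quadChar_dichotomy hx with h | h <;>
      simp only [quadClass, Set.mem_ofPred_eq, h, ne_eq, hx, not_false_eq_true, true_and] <;>
      norm_num

theorem sum_quadChar (hF : ringChar F ≠ 2) : ∑ x, quadChar F x = 0 :=
  MulChar.sum_eq_zero_of_ne_one (quadChar_ne_one hF)

theorem sum_quadChar_sq_mul (f : F → ℂ) : ∑ x, quadChar F x ^ 2 * f x = ∑ x, f x - f 0 := by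
  classical
  rw [Fintype.sum_eq_add_sum_compl 0, Fintype.sum_eq_add_sum_compl (f := f) 0, MulChar.map_zero,
    add_sub_cancel_left, zero_pow two_ne_zero, zero_mul, zero_add]
  refine Finset.sum_congr rfl fun x hx => ?_
  rw [quadChar_sq (by simpa using hx), one_mul]

theorem sum_indicator_quadClass (hF : ringChar F ≠ 2) {t : ℂ} (ht : t ^ 3 = t) :
    ∑ x, 𝟙[quadClass F t] x = t ^ 2 * ((Fintype.card F : ℂ) - 1) / 2 := by
  have hsq : ∑ x, quadChar F x ^ 2 = (Fintype.card F : ℂ) - 1 := by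
    simpa using sum_quadChar_sq_mul (F := F) 1
  simp only [indicator_quadClass ht, ← Finset.sum_div, Finset.sum_add_distrib, ← Finset.mul_sum,
    hsq, sum_quadChar hF, mul_zero, add_zero]

open Classical in
theorem sum_addChar_mul {ψ : AddChar F ℂ} (hψ : ψ ≠ 1) (c : F) :
    ∑ x, ψ (x * c) = if c = 0 then (Fintype.card F : ℂ) else 0 := by
  rw [AddChar.sum_mulShift c (AddChar.IsPrimitive.of_ne_one hψ), Nat.cast_ite, Nat.cast_zero]

theorem sum_quadChar_mul_addChar (hF : ringChar F ≠ 2) (ψ : AddChar F ℂ) (c : F) :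
    ∑ x, quadChar F x * ψ (x * c) = quadChar F c * gaussSum (quadChar F) ψ := by
  rcases eq_or_ne c 0 with rfl | hc
  · simp only [mul_zero, AddChar.map_zero_eq_one, mul_one, sum_quadChar hF, MulChar.map_zero,
      zero_mul]
  · have h := gaussSum_mulShift (quadChar F) ψ (Units.mk0 c hc)
    rw [Units.val_mk0] at h
    rw [← h, ← mul_assoc, ← pow_two, quadChar_sq hc, one_mul]
    simp only [gaussSum, AddChar.mulShift_apply, mul_comm c]

open Classical in
theorem sum_quadClass_mul_addChar (hF : ringChar F ≠ 2) {t : ℂ} (ht : t ^ 3 = t)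
    {ψ : AddChar F ℂ} (hψ : ψ ≠ 1) (c : F) :
    ∑ x, 𝟙[quadClass F t] x * ψ (x * c) =
      (t ^ 2 * ((if c = 0 then (Fintype.card F : ℂ) else 0) - 1) +
        t * (quadChar F c * gaussSum (quadChar F) ψ)) / 2 := by
  have hsq : ∑ x, quadChar F x ^ 2 * ψ (x * c) =
      (if c = 0 then (Fintype.card F : ℂ) else 0) - 1 := by
    rw [sum_quadChar_sq_mul, sum_addChar_mul hψ, zero_mul, AddChar.map_zero_eq_one]
  rw [← hsq, ← sum_quadChar_mul_addChar hF, Finset.mul_sum, Finset.mul_sum,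
    ← Finset.sum_add_distrib, Finset.sum_div]
  refine Finset.sum_congr rfl fun x _ => ?_
  rw [indicator_quadClass ht]
  ring

end QuadraticCharacter

section CyclotomicClass

variable {F : Type} [Field F] [Fintype F] {ω : F}

theorem sqSet_eq_quadClass_one : sqSet F = quadClass F 1 := by
  ext y
  refine ⟨?_, fun ⟨hy, h⟩ => ?_⟩
  · rintro ⟨z, hz, rfl⟩
    exact ⟨pow_ne_zero 2 hz, by rw [map_pow, quadChar_sq hz]⟩
  · obtain ⟨z, rfl⟩ := (quadChar_eq_one_iff hy).1 h
    exact ⟨z, left_ne_zero_of_mul hy, (pow_two z).symm⟩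

theorem quadChar_eq_neg_one_of_isPrim (hF : ringChar F ≠ 2) (hω : IsPrim F ω) :
    quadChar F ω = -1 := by
  obtain ⟨n, hn⟩ := exists_quadChar_eq_neg_one hF
  obtain ⟨k, rfl⟩ := hω n (ne_zero_of_quadChar_eq_neg_one hn)
  rw [map_pow] at hn
  have hω0 : ω ≠ 0 := by
    rintro rfl
    rw [MulChar.map_zero] at hn
    rcases k with _ | k <;> norm_num at hn
  refine (quadChar_dichotomy hω0).resolve_left fun h => ?_
  rw [h, one_pow] at hn
  norm_num at hn

theorem cyc_two_eq_quadClass (hF : ringChar F ≠ 2) (hω : IsPrim F ω) (i : ℕ) :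
    cyc F ω 2 i = quadClass F ((-1) ^ i) := by
  have hη := quadChar_eq_neg_one_of_isPrim hF hω
  have hω0 := ne_zero_of_quadChar_eq_neg_one hη
  ext x
  constructor
  · rintro ⟨k, rfl⟩
    refine ⟨mul_ne_zero (pow_ne_zero _ hω0) (pow_ne_zero _ (pow_ne_zero _ hω0)), ?_⟩
    simp only [map_mul, map_pow, hη, even_two, Even.neg_pow, one_pow, mul_one]
  · rintro ⟨hx, hxi⟩
    obtain ⟨n, hn⟩ := hω (x * (ω ^ i)⁻¹) (mul_ne_zero hx (inv_ne_zero (pow_ne_zero _ hω0)))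
    have hn_even : Even n := by
      have h : quadChar F (ω ^ n) = 1 := by
        rw [← hn, map_mul, quadChar_inv, map_pow, hη, hxi, ← mul_pow, neg_one_mul, neg_neg, one_pow]
      rw [map_pow, hη] at h
      exact neg_one_pow_eq_one_iff_even (by norm_num) |>.1 h
    obtain ⟨k, rfl⟩ := even_iff_exists_two_mul.1 hn_even
    refine ⟨k, ?_⟩
    rw [← pow_mul, ← hn, mul_comm, inv_mul_cancel_right₀ (pow_ne_zero _ hω0)]

end CyclotomicClass

section Cone

variable {F : Type*} [Field F] [Fintype F]

/-- The sum of the additive character `ψ(a x + b y)` over the points `(x, y)` of `E`. -/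
def charSum (ψ : AddChar F ℂ) (E : Set (F × F)) (a b : F) : ℂ :=
  ∑ w : F × F, 𝟙[E] w * ψ (a * w.1 + b * w.2)

theorem charSum_zero_zero (ψ : AddChar F ℂ) (E : Set (F × F)) : charSum ψ E 0 0 = E.ncard := by
  classical
  simp only [charSum, zero_mul, add_zero, AddChar.map_zero_eq_one, mul_one, Set.indicator_apply,
    Finset.sum_boole, Set.ncard_eq_toFinset_card', Set.filter_mem_univ_eq_toFinset]

/-- The union of half lines that Chen's four sets are instances of: for each slope `y` the multiples
`x • (1, y)` with `x` a nonzero square if `y ∈ A`, a nonsquare if `y ∈ B`, together with the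
multiples `x • (0, 1)` with `x ∈ quadClass F t` (none for `t = 0`). -/
def cone (A B : Set F) (t : ℂ) : Set (F × F) :=
  {w | ∃ x ∈ quadClass F 1, ∃ y ∈ A, w = (x, x * y)} ∪
    {w | ∃ x ∈ quadClass F (-1), ∃ y ∈ B, w = (x, x * y)} ∪
    {w | ∃ x ∈ quadClass F t, w = ((0 : F), x)}

variable {A B A' B' : Set F} {t t' : ℂ}

theorem zero_mk_mem_cone_iff {z : F} : ((0 : F), z) ∈ cone A B t ↔ z ∈ quadClass F t := by
  constructor
  · rintro ((⟨x, hx, y, -, h⟩ | ⟨x, hx, y, -, h⟩) | ⟨x, hx, h⟩)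
    · exact absurd (congrArg Prod.fst h).symm hx.1
    · exact absurd (congrArg Prod.fst h).symm hx.1
    · obtain ⟨-, rfl⟩ := Prod.mk.inj h
      exact hx
  · exact fun hz => Or.inr ⟨z, hz, rfl⟩

theorem mk_mul_mem_cone_iff {x y : F} (hx : x ≠ 0) :
    (x, x * y) ∈ cone A B t ↔ quadChar F x = 1 ∧ y ∈ A ∨ quadChar F x = -1 ∧ y ∈ B := by
  have slope_eq {x' y' : F} (h : (x, x * y) = (x', x' * y')) : x = x' ∧ y = y' := by
    obtain ⟨rfl, h⟩ := Prod.mk.inj h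
    exact ⟨rfl, mul_left_cancel₀ hx h⟩
  constructor
  · rintro ((⟨x', hx', y', hy', h⟩ | ⟨x', hx', y', hy', h⟩) | ⟨x', -, h⟩)
    · obtain ⟨rfl, rfl⟩ := slope_eq h
      exact Or.inl ⟨hx'.2, hy'⟩
    · obtain ⟨rfl, rfl⟩ := slope_eq h
      exact Or.inr ⟨hx'.2, hy'⟩
    · exact absurd (congrArg Prod.fst h) hx
  · rintro (⟨hη, hy⟩ | ⟨hη, hy⟩)
    · exact Or.inl (Or.inl ⟨x, ⟨hx, hη⟩, y, hy, rfl⟩)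
    · exact Or.inl (Or.inr ⟨x, ⟨hx, hη⟩, y, hy, rfl⟩)

theorem sum_prod_eq_sum_line (f : F × F → ℂ) :
    ∑ w, f w = ∑ z, f (0, z) + ∑ y, ∑ x, quadChar F x ^ 2 * f (x, x * y) := by
  have hline (x : F) :
      quadChar F x ^ 2 * ∑ z, f (x, z) = ∑ y, quadChar F x ^ 2 * f (x, x * y) := by
    rcases eq_or_ne x 0 with rfl | hx
    · simp only [MulChar.map_zero, ne_eq, OfNat.ofNat_ne_zero, not_false_eq_true, zero_pow,
        zero_mul, Finset.sum_const_zero]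
    · rw [Finset.mul_sum]
      exact (Fintype.sum_bijective _ (mulLeft_bijective₀ x hx) _ _ fun y => rfl).symm
  rw [Fintype.sum_prod_type, Finset.sum_comm (s := Finset.univ) (t := Finset.univ)
    (f := fun y x => quadChar F x ^ 2 * f (x, x * y)), ← Finset.sum_congr rfl fun x _ => hline x,
    sum_quadChar_sq_mul, add_sub_cancel]

theorem indicator_cone_zero_mk (z : F) : 𝟙[cone A B t] ((0 : F), z) = 𝟙[quadClass F t] z := by
  classical
  simp only [Set.indicator_apply, zero_mk_mem_cone_iff]

theorem quadChar_sq_mul_indicator_cone (x y : F) :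
    quadChar F x ^ 2 * 𝟙[cone A B t] (x, x * y) =
      𝟙[A] y * 𝟙[quadClass F 1] x + 𝟙[B] y * 𝟙[quadClass F (-1)] x := by
  classical
  rcases eq_or_ne x 0 with rfl | hx
  · simp [MulChar.map_zero, zero_notMem_quadClass]
  · rw [quadChar_sq hx, one_mul]
    simp only [Set.indicator_apply, mk_mul_mem_cone_iff hx, quadClass, Set.mem_ofPred_eq, ne_eq, hx,
      not_false_eq_true, true_and]
    rcases quadChar_dichotomy hx with h | h <;> simp only [h] <;> norm_num

theorem charSum_cone_eq_sum_quadClass (ψ : AddChar F ℂ) (a b : F) :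
    charSum ψ (cone A B t) a b =
      ∑ x, 𝟙[quadClass F t] x * ψ (x * b) +
        ∑ y, (𝟙[A] y * ∑ x, 𝟙[quadClass F 1] x * ψ (x * (a + b * y)) +
          𝟙[B] y * ∑ x, 𝟙[quadClass F (-1)] x * ψ (x * (a + b * y))) := by
  rw [charSum, sum_prod_eq_sum_line]
  congr 1
  · refine Finset.sum_congr rfl fun z _ => ?_
    rw [indicator_cone_zero_mk, mul_zero, zero_add, mul_comm b]
  · refine Finset.sum_congr rfl fun y _ => ?_
    rw [Finset.mul_sum, Finset.mul_sum, ← Finset.sum_add_distrib]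
    refine Finset.sum_congr rfl fun x _ => ?_
    rw [← mul_assoc, quadChar_sq_mul_indicator_cone,
      show a * x + b * (x * y) = x * (a + b * y) by ring]
    ring

open Classical in
theorem charSum_cone (hF : ringChar F ≠ 2) (ht : t ^ 3 = t) {ψ : AddChar F ℂ} (hψ : ψ ≠ 1)
    (a b : F) :
    charSum ψ (cone A B t) a b =
      (t ^ 2 * ((if b = 0 then (Fintype.card F : ℂ) else 0) - 1) +
        t * (quadChar F b * gaussSum (quadChar F) ψ) +
        ∑ y, (𝟙[A] y + 𝟙[B] y) * ((if a + b * y = 0 then (Fintype.card F : ℂ) else 0) - 1) +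
        gaussSum (quadChar F) ψ * ∑ y, (𝟙[A] y - 𝟙[B] y) * quadChar F (a + b * y)) / 2 := by
  have hslope (y : F) : 𝟙[A] y * ∑ x, 𝟙[quadClass F 1] x * ψ (x * (a + b * y)) +
      𝟙[B] y * ∑ x, 𝟙[quadClass F (-1)] x * ψ (x * (a + b * y)) =
        ((𝟙[A] y + 𝟙[B] y) * ((if a + b * y = 0 then (Fintype.card F : ℂ) else 0) - 1) +
          gaussSum (quadChar F) ψ * ((𝟙[A] y - 𝟙[B] y) * quadChar F (a + b * y))) / 2 := by
    rw [sum_quadClass_mul_addChar hF (by norm_num) hψ,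
      sum_quadClass_mul_addChar hF (by norm_num) hψ]
    ring
  simp only [charSum_cone_eq_sum_quadClass, sum_quadClass_mul_addChar hF ht hψ, hslope,
    ← Finset.sum_div, Finset.sum_add_distrib (f := fun y => (𝟙[A] y + 𝟙[B] y) * _),
    ← Finset.mul_sum]
  ring

theorem charSum_cone_zero_zero (hF : ringChar F ≠ 2) (ht : t ^ 3 = t) {ψ : AddChar F ℂ}
    (hψ : ψ ≠ 1) :
    charSum ψ (cone A B t) 0 0 =
      (t ^ 2 + ∑ y, (𝟙[A] y + 𝟙[B] y)) * ((Fintype.card F : ℂ) - 1) / 2 := by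
  rw [charSum_cone hF ht hψ]
  simp only [if_true, zero_mul, add_zero, MulChar.map_zero, mul_zero, Finset.sum_const_zero,
    ← Finset.sum_mul]
  ring

theorem charSum_cone_zero_right (hF : ringChar F ≠ 2) (ht : t ^ 3 = t) {ψ : AddChar F ℂ}
    (hψ : ψ ≠ 1) {a : F} (ha : a ≠ 0) :
    charSum ψ (cone A B t) a 0 =
      (t ^ 2 * ((Fintype.card F : ℂ) - 1) - ∑ y, (𝟙[A] y + 𝟙[B] y) +
        quadChar F a * gaussSum (quadChar F) ψ * ∑ y, (𝟙[A] y - 𝟙[B] y)) / 2 := by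
  rw [charSum_cone hF ht hψ]
  simp only [if_true, zero_mul, add_zero, MulChar.map_zero, mul_zero, ha, if_false,
    ← Finset.sum_mul]
  ring

theorem charSum_cone_of_ne_zero (hF : ringChar F ≠ 2) (ht : t ^ 3 = t) {ψ : AddChar F ℂ}
    (hψ : ψ ≠ 1) {b : F} (hb : b ≠ 0) (c : F) :
    charSum ψ (cone A B t) (-(b * c)) b =
      (t * (quadChar F b * gaussSum (quadChar F) ψ) - t ^ 2 - ∑ y, (𝟙[A] y + 𝟙[B] y) +
        (Fintype.card F : ℂ) * (𝟙[A] c + 𝟙[B] c) +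
        quadChar F b * gaussSum (quadChar F) ψ *
          ∑ y, (𝟙[A] y - 𝟙[B] y) * quadChar F (y - c)) / 2 := by
  classical
  have hshift (y : F) : -(b * c) + b * y = b * (y - c) := by ring
  have hzero (y : F) : b * (y - c) = 0 ↔ y = c := by
    rw [mul_eq_zero, or_iff_right hb, sub_eq_zero]
  have hP : ∑ y, (𝟙[A] y + 𝟙[B] y) * ((if y = c then (Fintype.card F : ℂ) else 0) - 1) =
      (𝟙[A] c + 𝟙[B] c) * (Fintype.card F : ℂ) - ∑ y, (𝟙[A] y + 𝟙[B] y) := by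
    simp only [mul_sub_one, mul_ite, mul_zero, Finset.sum_sub_distrib, Finset.sum_ite_eq',
      Finset.mem_univ, if_true]
  have hD : ∑ y, (𝟙[A] y - 𝟙[B] y) * (quadChar F b * quadChar F (y - c)) =
      quadChar F b * ∑ y, (𝟙[A] y - 𝟙[B] y) * quadChar F (y - c) := by
    simp only [mul_left_comm _ (quadChar F b), ← Finset.mul_sum]
  rw [charSum_cone hF ht hψ]
  simp only [hshift, hzero, map_mul, hb, if_false, hP, hD]
  ring

theorem charSum_cone_swap (hF : ringChar F ≠ 2) (ht : t ^ 3 = t) {ψ : AddChar F ℂ} (hψ : ψ ≠ 1)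
    {n : F} (hn : quadChar F n = -1) (a b : F) :
    charSum ψ (cone B A (-t)) a b = charSum ψ (cone A B t) (n * a) (n * b) := by
  classical
  have hn0 := ne_zero_of_quadChar_eq_neg_one hn
  have hshift (y : F) : n * a + n * b * y = n * (a + b * y) := by ring
  have hD : ∑ y, (𝟙[B] y - 𝟙[A] y) * quadChar F (a + b * y) =
      ∑ y, (𝟙[A] y - 𝟙[B] y) * (-1 * quadChar F (a + b * y)) :=
    Finset.sum_congr rfl fun y _ => by ring
  rw [charSum_cone hF ht hψ, charSum_cone hF (by linear_combination -ht) hψ, hD]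
  simp only [hshift, map_mul, hn, mul_eq_zero, hn0, false_or, add_comm (𝟙[B] _)]
  ring

end Cone

section FiniteExtension

variable {K L : Type*} [Field K] [Fintype K] [Field L] [Fintype L] [Algebra K L]

theorem quadraticChar_norm [DecidableEq K] [DecidableEq L] (hK : ringChar K ≠ 2) (x : L) :
    quadraticChar K (Algebra.norm K x) = quadraticChar L x := by
  have hL : ringChar L ≠ 2 := by rwa [← Algebra.ringChar_eq K L]
  have hexp : (Fintype.card L - 1) / (Fintype.card K - 1) * (Fintype.card K / 2) =
      Fintype.card L / 2 := by
    have hdvd : Fintype.card K - 1 ∣ Fintype.card L - 1 := by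
      rw [Module.card_eq_pow_finrank (K := K) (V := L)]
      exact Nat.sub_one_dvd_pow_sub_one _ _
    have hoddK := FiniteField.odd_card_of_char_ne_two hK
    have hoddL := FiniteField.odd_card_of_char_ne_two hL
    have hmul := Nat.div_mul_cancel hdvd
    rw [show Fintype.card K - 1 = 2 * (Fintype.card K / 2) by omega] at hmul ⊢
    have : (Fintype.card L - 1) / (2 * (Fintype.card K / 2)) * (Fintype.card K / 2) * 2 =
        Fintype.card L - 1 := by rw [mul_assoc, mul_comm _ 2, hmul]
    omega
  have hnorm : algebraMap K L (Algebra.norm K x) =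
      x ^ ((Fintype.card L - 1) / (Fintype.card K - 1)) := by
    rw [FiniteField.algebraMap_norm_eq_pow, Nat.card_eq_fintype_card, Nat.card_eq_fintype_card]
  refine (quadraticChar_isQuadratic K).eq_of_eq_coe (quadraticChar_isQuadratic L) hL ?_
  rw [quadraticChar_eq_pow_of_char_ne_two' hL, ← hexp, pow_mul, ← hnorm, ← map_pow,
    ← quadraticChar_eq_pow_of_char_ne_two' hK, map_intCast]

theorem quadChar_norm (hK : ringChar K ≠ 2) (x : L) :
    quadChar K (Algebra.norm K x) = quadChar L x := by
  classical
  simp only [quadChar, MulChar.ringHomComp_apply, quadraticChar_norm hK]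

end FiniteExtension

section QuadraticExtension

variable {K L : Type*} [Field K] [Fintype K] [Field L] [Fintype L] [Algebra K L]
  (hK : ringChar K ≠ 2) (h2 : Module.finrank K L = 2)

include hK h2

omit [Fintype K] in
theorem quadChar_algebraMap {u : K} (hu : u ≠ 0) : quadChar L (algebraMap K L u) = 1 := by
  have := Finite.of_injective _ (algebraMap K L).injective
  have := Fintype.ofFinite K
  rw [← quadChar_norm hK, Algebra.norm_algebraMap, h2, map_pow, quadChar_sq hu]

-- Here `N(y) = -y²`, so `-N(y)` has its square roots `±y` outside `K` and is a nonsquare there.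
theorem quadChar_of_trace_eq_zero {y : L} (hy : y ≠ 0) (htr : Algebra.trace K L y = 0) :
    quadChar L y = -quadChar K (-1) := by
  have hnorm : algebraMap K L (-Algebra.norm K y) = y ^ 2 := by
    have h := FiniteField.algebraMap_trace_eq_sum_pow K L y
    rw [map_neg, FiniteField.algebraMap_norm_eq_pow_sum, h2]
    rw [htr, map_zero, h2] at h
    simp only [Finset.sum_range_succ, Finset.sum_range_zero, pow_zero, pow_one, zero_add,
      pow_add] at h ⊢
    linear_combination y * h
  have hnonsquare : ¬ IsSquare (-Algebra.norm K y) := by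
    rintro ⟨z, hz⟩
    obtain ⟨z', rfl⟩ : ∃ z', y = algebraMap K L z' := by
      rw [hz, ← pow_two, map_pow, eq_comm] at hnorm
      rcases sq_eq_sq_iff_eq_or_eq_neg.1 hnorm with h | h
      · exact ⟨z, h⟩
      · exact ⟨-z, by rw [h, map_neg]⟩
    rw [Algebra.trace_algebraMap, h2, nsmul_eq_mul, mul_eq_zero] at htr
    rcases htr with h | rfl
    · exact Ring.two_ne_zero hK (by exact_mod_cast h)
    · exact hy (map_zero _)
  have hN : -Algebra.norm K y ≠ 0 := neg_ne_zero.2 (Algebra.norm_ne_zero_iff.2 hy)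
  have hη : quadChar K (-1) * quadChar L y = -1 := by
    rw [← quadChar_norm hK y, ← map_mul, neg_one_mul]
    exact (quadChar_dichotomy hN).resolve_left fun h => hnonsquare ((quadChar_eq_one_iff hN).1 h)
  have hsq : quadChar K (-1) ^ 2 = 1 := quadChar_sq (neg_ne_zero.2 one_ne_zero)
  linear_combination quadChar K (-1) * hη - quadChar L y * hsq

omit [Fintype K] in
theorem bijective_trace_prod {a b : L} (hab : quadChar L a * quadChar L b = -1) :
    Function.Bijective fun y => (Algebra.trace K L (y * a), Algebra.trace K L (y * b)) := by
  have := Finite.of_injective _ (algebraMap K L).injective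
  have := Fintype.ofFinite K
  have hab0 : a ≠ 0 ∧ b ≠ 0 := by
    constructor <;> rintro rfl <;> rw [MulChar.map_zero] at hab <;> norm_num at hab
  have hcard : Fintype.card L = Fintype.card (K × K) := by
    rw [Module.card_eq_pow_finrank (K := K), h2, Fintype.card_prod, pow_two]
  refine (Fintype.bijective_iff_injective_and_card _).2 ⟨fun x y hxy => ?_, hcard⟩
  obtain ⟨ha, hb⟩ := Prod.mk.inj hxy
  by_contra hne
  have hxy0 : x - y ≠ 0 := sub_ne_zero.2 hne
  have hηa := quadChar_of_trace_eq_zero hK h2 (mul_ne_zero hxy0 hab0.1)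
    (by rw [sub_mul, map_sub, ha, sub_self])
  have hηb := quadChar_of_trace_eq_zero hK h2 (mul_ne_zero hxy0 hab0.2)
    (by rw [sub_mul, map_sub, hb, sub_self])
  have hsq : quadChar K (-1) ^ 2 = 1 := quadChar_sq (neg_ne_zero.2 one_ne_zero)
  rw [map_mul] at hηa hηb
  have : (-1 : ℂ) = 1 := by
    linear_combination (-quadChar L a * quadChar L b) * quadChar_sq hxy0 - hab + hsq +
      quadChar L (x - y) * quadChar L b * hηa - quadChar K (-1) * hηb
  norm_num at this

theorem sum_trace_mul_trace {a b : L} (hab : quadChar L a * quadChar L b = -1) (f g : K → ℂ) :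
    ∑ y, f (Algebra.trace K L (y * a)) * g (Algebra.trace K L (y * b)) =
      (∑ u, f u) * ∑ v, g v := by
  rw [Finset.sum_mul_sum, ← Fintype.sum_prod_type']
  exact Fintype.sum_bijective _ (bijective_trace_prod hK h2 hab) _ _ fun y => rfl

theorem sum_trace {a : L} (ha : a ≠ 0) (f : K → ℂ) :
    ∑ y, f (Algebra.trace K L (y * a)) = (Fintype.card K : ℂ) * ∑ u, f u := by
  obtain ⟨n, hn⟩ := exists_quadChar_eq_neg_one (F := L) (by rwa [← Algebra.ringChar_eq K L])
  have hab : quadChar L a * quadChar L (n * a) = -1 := by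
    rw [map_mul, hn]
    linear_combination -quadChar_sq ha
  simpa [mul_comm] using sum_trace_mul_trace hK h2 hab f 1

open Classical in
theorem sum_quadChar_trace_eq_zero :
    ∑ y : L, (if Algebra.trace K L y = 0 then 1 else 0) * quadChar L y =
      -quadChar K (-1) * ((Fintype.card K : ℂ) - 1) := by
  have hker : ∑ y : L, (if Algebra.trace K L y = 0 then (1 : ℂ) else 0) = Fintype.card K := by
    simpa using sum_trace hK h2 (one_ne_zero (α := L)) fun u => if u = 0 then (1 : ℂ) else 0
  calc ∑ y : L, (if Algebra.trace K L y = 0 then 1 else 0) * quadChar L y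
      = ∑ y : L, quadChar L y ^ 2 *
          (-quadChar K (-1) * if Algebra.trace K L y = 0 then (1 : ℂ) else 0) := by
        refine Finset.sum_congr rfl fun y _ => ?_
        rcases eq_or_ne y 0 with rfl | hy
        · simp [MulChar.map_zero]
        · split_ifs with h
          · rw [quadChar_of_trace_eq_zero hK h2 hy h,
              neg_sq, quadChar_sq (neg_ne_zero.2 one_ne_zero), mul_one]
          · rw [zero_mul, mul_zero, mul_zero]
    _ = -quadChar K (-1) * ((Fintype.card K : ℂ) - 1) := by
        rw [sum_quadChar_sq_mul, ← Finset.mul_sum, hker, map_zero, if_pos rfl, mul_sub]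

-- Multiplication by `x ∈ Kˣ` preserves `η`, so averaging the sum over `x` replaces `f` by a
-- function that is constant on `K ∖ {0}`.
theorem sum_trace_mul_quadChar (f : K → ℂ) :
    ∑ y, f (Algebra.trace K L y) * quadChar L y =
      -quadChar K (-1) * ((Fintype.card K : ℂ) * f 0 - ∑ u, f u) := by
  classical
  have hscale (x : K) : quadChar K x ^ 2 * ∑ y, f (Algebra.trace K L y) * quadChar L y =
      ∑ y, quadChar K x ^ 2 * f (x * Algebra.trace K L y) * quadChar L y := by
    rcases eq_or_ne x 0 with rfl | hx
    · simp [MulChar.map_zero]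
    · have hx' : algebraMap K L x ≠ 0 := (map_ne_zero _).2 hx
      rw [quadChar_sq hx, one_mul, ← (mulLeft_bijective₀ _ hx').sum_comp]
      refine Finset.sum_congr rfl fun y _ => ?_
      rw [map_mul (quadChar L), quadChar_algebraMap hK h2 hx, ← Algebra.smul_def, map_smul,
        smul_eq_mul, one_mul, one_mul]
  have haverage (v : K) : ∑ x, quadChar K x ^ 2 * f (x * v) =
      (∑ u, f u - f 0) +
        ((Fintype.card K : ℂ) * f 0 - ∑ u, f u) * if v = 0 then 1 else 0 := by
    rw [sum_quadChar_sq_mul fun x => f (x * v), zero_mul]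
    split_ifs with hv
    · simp [hv]
    · rw [(mulRight_bijective₀ v hv).sum_comp f]
      ring
  have hcard : ∑ x : K, quadChar K x ^ 2 = (Fintype.card K : ℂ) - 1 := by
    simpa using sum_quadChar_sq_mul (F := K) 1
  have hcard0 : (Fintype.card K : ℂ) - 1 ≠ 0 := by
    rw [sub_ne_zero]
    exact_mod_cast Fintype.one_lt_card.ne'
  refine mul_left_cancel₀ hcard0 ?_
  rw [← hcard, Finset.sum_mul, Finset.sum_congr rfl fun x _ => hscale x, Finset.sum_comm]
  simp only [← Finset.sum_mul, haverage]
  simp only [add_mul, mul_assoc, Finset.sum_add_distrib, ← Finset.mul_sum, hcard,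
    sum_quadChar_trace_eq_zero hK h2,
    sum_quadChar (F := L) (by rwa [← Algebra.ringChar_eq K L])]
  ring

theorem sum_trace_mul_quadChar_sub {a : L} (ha : a ≠ 0) (f : K → ℂ) (c : L) :
    ∑ y, f (Algebra.trace K L (y * a)) * quadChar L (y - c) =
      quadChar L a * (-quadChar K (-1) *
        ((Fintype.card K : ℂ) * f (Algebra.trace K L (c * a)) - ∑ u, f u)) := by
  have h := sum_trace_mul_quadChar hK h2 fun u => f (u + Algebra.trace K L (c * a))
  have hshift : ∑ u, f (u + Algebra.trace K L (c * a)) = ∑ u, f u :=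
    Equiv.sum_comp (Equiv.addRight (Algebra.trace K L (c * a))) f
  rw [zero_add, hshift] at h
  rw [← h, Finset.mul_sum]
  refine Fintype.sum_equiv ((Equiv.subRight c).trans (Equiv.mulRight₀ a ha)) _ _ fun y => ?_
  rw [Equiv.trans_apply, Equiv.subRight_apply, Equiv.mulRight₀_apply, ← map_add, ← add_mul,
    sub_add_cancel, map_mul (quadChar L)]
  linear_combination
    -f (Algebra.trace K L (y * a)) * quadChar L (y - c) * quadChar_sq ha

theorem gaussSum_quadChar_comp_trace {φ : AddChar K ℂ} (hφ : φ ≠ 1) :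
    gaussSum (quadChar L) (φ.compAddMonoidHom (Algebra.trace K L).toAddMonoidHom) =
      -quadChar K (-1) * (Fintype.card K : ℂ) := by
  have h := sum_trace_mul_quadChar hK h2 φ
  rw [AddChar.map_zero_eq_one, AddChar.sum_eq_zero_of_ne_one hφ, mul_one, sub_zero] at h
  rw [← h]
  exact Finset.sum_congr rfl fun y _ => mul_comm _ _

end QuadraticExtension

section TraceSquareSet

/-- The elements `y` with `Tr(ya)` a nonzero square of `K`. Chen's sets `X` and `X'` are those
for `a = 1` and `a = ω⁻¹`. -/
def traceSquareSet (K : Type*) {L : Type*} [Field K] [Fintype K] [Field L] [Algebra K L] (a : L) :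
    Set L :=
  {y | Algebra.trace K L (y * a) ∈ quadClass K 1}

variable {K L : Type*} [Field K] [Fintype K] [Field L] [Algebra K L]

theorem indicator_traceSquareSet (a y : L) :
    𝟙[traceSquareSet K a] y = 𝟙[quadClass K 1] (Algebra.trace K L (y * a)) := by
  classical
  simp only [Set.indicator_apply, traceSquareSet, Set.mem_ofPred_eq]

theorem zero_notMem_traceSquareSet (a : L) : (0 : L) ∉ traceSquareSet K a := by
  rw [traceSquareSet, Set.mem_ofPred_eq, zero_mul, map_zero]
  exact zero_notMem_quadClass 1

variable [Fintype L] (hK : ringChar K ≠ 2) (h2 : Module.finrank K L = 2)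

include hK h2

theorem sum_indicator_traceSquareSet {a : L} (ha : a ≠ 0) :
    ∑ y, 𝟙[traceSquareSet K a] y = (Fintype.card K : ℂ) * ((Fintype.card K - 1) / 2) := by
  simp only [indicator_traceSquareSet, sum_trace hK h2 ha 𝟙[quadClass K 1],
    sum_indicator_quadClass hK (one_pow 3), one_pow, one_mul]

theorem sum_indicator_traceSquareSet_mul {a b : L} (hab : quadChar L a * quadChar L b = -1) :
    ∑ y, 𝟙[traceSquareSet K a] y * 𝟙[traceSquareSet K b] y =
      (((Fintype.card K : ℂ) - 1) / 2) ^ 2 := by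
  simp only [indicator_traceSquareSet, sum_trace_mul_trace hK h2 hab,
    sum_indicator_quadClass hK (one_pow 3), one_mul, pow_two]

theorem sum_indicator_traceSquareSet_mul_quadChar_sub {a : L} (ha : a ≠ 0) (c : L) :
    ∑ y, 𝟙[traceSquareSet K a] y * quadChar L (y - c) =
      quadChar L a * (-quadChar K (-1) *
        ((Fintype.card K : ℂ) * 𝟙[traceSquareSet K a] c - (Fintype.card K - 1) / 2)) := by
  simp only [indicator_traceSquareSet, sum_trace_mul_quadChar_sub hK h2 ha 𝟙[quadClass K 1],
    sum_indicator_quadClass hK (one_pow 3), one_pow, one_mul]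

theorem sum_traceSquareSet_sdiff_mul_quadChar_sub {a b : L} (ha : quadChar L a = 1)
    (hb : quadChar L b = -1) (c : L) :
    ∑ y, (𝟙[traceSquareSet K a \ traceSquareSet K b] y -
        𝟙[traceSquareSet K b \ traceSquareSet K a] y) * quadChar L (y - c) =
      -quadChar K (-1) * (Fintype.card K : ℂ) *
        (𝟙[traceSquareSet K a] c + 𝟙[traceSquareSet K b] c - 1) - quadChar K (-1) := by
  simp only [indicator_sdiff_sub_indicator_sdiff, sub_mul, Finset.sum_sub_distrib,
    sum_indicator_traceSquareSet_mul_quadChar_sub hK h2 (ne_zero_of_quadChar_eq_one ha),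
    sum_indicator_traceSquareSet_mul_quadChar_sub hK h2 (ne_zero_of_quadChar_eq_neg_one hb), ha, hb]
  ring

theorem sum_traceSquareSet_inter_mul_quadChar_sub {a b : L} (ha : quadChar L a = 1)
    (hb : quadChar L b = -1) (c : L) :
    ∑ y, (𝟙[traceSquareSet K a ∩ traceSquareSet K b] y -
        𝟙[(traceSquareSet K a ∪ traceSquareSet K b)ᶜ] y) * quadChar L (y - c) =
      -quadChar K (-1) * (Fintype.card K : ℂ) *
        (𝟙[traceSquareSet K a] c - 𝟙[traceSquareSet K b] c) := by
  have hη : ∑ y, quadChar L (y - c) = 0 :=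
    ((Equiv.subRight c).sum_comp (quadChar L)).trans
      (sum_quadChar (by rwa [← Algebra.ringChar_eq K L]))
  simp only [indicator_inter_sub_indicator_compl_union, sub_mul, add_mul, one_mul,
    Finset.sum_sub_distrib, Finset.sum_add_distrib, hη,
    sum_indicator_traceSquareSet_mul_quadChar_sub hK h2 (ne_zero_of_quadChar_eq_one ha),
    sum_indicator_traceSquareSet_mul_quadChar_sub hK h2 (ne_zero_of_quadChar_eq_neg_one hb), ha, hb]
  ring

theorem sum_traceSquareSet_inter_sub_compl_union {a b : L} (ha : a ≠ 0) (hb : b ≠ 0) :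
    ∑ y, (𝟙[traceSquareSet K a ∩ traceSquareSet K b] y -
      𝟙[(traceSquareSet K a ∪ traceSquareSet K b)ᶜ] y) = -(Fintype.card K : ℂ) := by
  simp only [indicator_inter_sub_indicator_compl_union, Finset.sum_add_distrib,
    Finset.sum_sub_distrib, sum_indicator_traceSquareSet hK h2 ha,
    sum_indicator_traceSquareSet hK h2 hb, Finset.sum_const, Finset.card_univ, nsmul_eq_mul,
    Module.card_eq_pow_finrank (K := K) (V := L), h2, Nat.cast_pow]
  ring

end TraceSquareSet

section TypeQ

variable (p : ℕ) [Fact p.Prime]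

/-- The canonical additive character `x ↦ ζ_p ^ Tr(x)` of a finite field of characteristic `p`. -/
def psiChar (F : Type*) [Field F] [CharP F p] : AddChar F ℂ :=
  letI : Algebra (ZMod p) F := ZMod.algebra F p
  ZMod.stdAddChar.compAddMonoidHom (Algebra.trace (ZMod p) F).toAddMonoidHom

theorem psiChar_ne_one (F : Type*) [Field F] [Finite F] [CharP F p] : psiChar p F ≠ 1 := by
  let : Algebra (ZMod p) F := ZMod.algebra F p
  obtain ⟨x, hx⟩ := Algebra.trace_surjective (ZMod p) F 1
  refine AddChar.ne_one_iff.2 ⟨x, fun h => one_ne_zero (α := ZMod p) ?_⟩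
  refine ZMod.injective_stdAddChar ?_
  rw [← hx, AddChar.map_zero_eq_one]
  exact h

theorem psiChar_eq_comp_trace (K L : Type*) [Field K] [Field L] [Finite L] [Algebra K L]
    [CharP K p] [CharP L p] :
    psiChar p L = (psiChar p K).compAddMonoidHom (Algebra.trace K L).toAddMonoidHom := by
  let : Algebra (ZMod p) L := ZMod.algebra L p
  let : Algebra (ZMod p) K := ZMod.algebra K p
  have := Finite.of_injective _ (algebraMap K L).injective
  have : IsScalarTower (ZMod p) K L := IsScalarTower.of_algebraMap_eq' (RingHom.ext_zmod _ _)
  ext x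
  exact congrArg ZMod.stdAddChar (Algebra.trace_trace x).symm

theorem psiL_eq_psiChar {L : Type} [Field L] [Fintype L] [CharP L p] (x : L) :
    psiL p L x = psiChar p L x := by
  let : Algebra (ZMod p) L := ZMod.algebra L p
  have hstd (j : ZMod p) : zetaP p ^ j.val = ZMod.stdAddChar j := by
    have h := ZMod.stdAddChar_coe (N := p) (j.val : ℤ)
    rw [Int.cast_natCast, ZMod.natCast_zmod_val] at h
    rw [h, zetaP, ← Complex.exp_nat_mul]
    congr 1
    push_cast
    ring
  exact hstd _

variable {p} {q : ℕ} {L : Type} [Field L] [Fintype L] [CharP L p]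

theorem psiSum_eq_charSum (a b : L) (E : Set (L × L)) :
    psiSum p L a b E = charSum (psiChar p L) E a b := by
  classical
  rw [psiSum, finsum_mem_def, finsum_eq_sum_of_fintype]
  refine Finset.sum_congr rfl fun w _ => ?_
  simp only [Set.indicator_apply, psiL_eq_psiChar, ite_mul, one_mul, zero_mul]

theorem isTypeQ_iff (hq : Odd q) {E : Set (L × L)} :
    IsTypeQ p q L E ↔ charSum (psiChar p L) E 0 0 = ((q : ℂ) ^ 4 - 1) / 4 ∧
      ∀ a b : L, (a, b) ≠ ((0 : L), (0 : L)) →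
        charSum (psiChar p L) E a b = ((q : ℂ) ^ 2 - 1) / 4 ∨
        charSum (psiChar p L) E a b = (-3 * (q : ℂ) ^ 2 - 1) / 4 := by
  have hcast : (((q ^ 4 - 1) / 4 : ℕ) : ℂ) = ((q : ℂ) ^ 4 - 1) / 4 := by
    have h4 : 4 ∣ q ^ 4 - 1 := by
      obtain ⟨m, rfl⟩ := hq
      exact ⟨4 * m ^ 4 + 8 * m ^ 3 + 6 * m ^ 2 + 2 * m, Nat.sub_eq_of_eq_add (by ring)⟩
    rw [Nat.cast_div h4 (by norm_num), Nat.cast_sub (Nat.one_le_pow _ _ hq.pos)]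
    push_cast
    rfl
  simp only [IsTypeQ, psiSum_eq_charSum, charSum_zero_zero, ← hcast, Nat.cast_inj]

theorem IsTypeQ.cone_swap (hL : ringChar L ≠ 2) (hq : Odd q) {A B : Set L} {t : ℂ}
    (ht : t ^ 3 = t) (h : IsTypeQ p q L (cone A B t)) : IsTypeQ p q L (cone B A (-t)) := by
  obtain ⟨n, hn⟩ := exists_quadChar_eq_neg_one hL
  have hn0 := ne_zero_of_quadChar_eq_neg_one hn
  rw [isTypeQ_iff hq] at h ⊢
  simp only [charSum_cone_swap hL ht (psiChar_ne_one p L) hn, mul_zero]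
  refine ⟨h.1, fun a b hab => h.2 _ _ fun h0 => hab ?_⟩
  simpa only [Prod.mk.injEq, mul_eq_zero, hn0, false_or] using h0

theorem isTypeQ_cone (hL : ringChar L ≠ 2) (hq : Odd q) (hcard : Fintype.card L = q ^ 2)
    {A B : Set L} {t : ℂ} (ht : t ^ 3 = t)
    (hsum : ∑ y, (𝟙[A] y + 𝟙[B] y) = ((q : ℂ) ^ 2 + 1) / 2 - t ^ 2)
    (hinfty : ∀ s : ℂ, s = 1 ∨ s = -1 →
      t ^ 2 * (q : ℂ) ^ 2 +
          s * gaussSum (quadChar L) (psiChar p L) * ∑ y, (𝟙[A] y - 𝟙[B] y) = (q : ℂ) ^ 2 ∨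
      t ^ 2 * (q : ℂ) ^ 2 +
          s * gaussSum (quadChar L) (psiChar p L) * ∑ y, (𝟙[A] y - 𝟙[B] y) = -(q : ℂ) ^ 2)
    (hfinite : ∀ s : ℂ, s = 1 ∨ s = -1 → ∀ c : L,
      (q : ℂ) ^ 2 * (𝟙[A] c + 𝟙[B] c) + s * gaussSum (quadChar L) (psiChar p L) *
          (t + ∑ y, (𝟙[A] y - 𝟙[B] y) * quadChar L (y - c)) = (q : ℂ) ^ 2 ∨
      (q : ℂ) ^ 2 * (𝟙[A] c + 𝟙[B] c) + s * gaussSum (quadChar L) (psiChar p L) *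
          (t + ∑ y, (𝟙[A] y - 𝟙[B] y) * quadChar L (y - c)) = -(q : ℂ) ^ 2) :
    IsTypeQ p q L (cone A B t) := by
  have hψ := psiChar_ne_one p L
  have hcard' : (Fintype.card L : ℂ) = (q : ℂ) ^ 2 := by rw [hcard, Nat.cast_pow]
  rw [isTypeQ_iff hq, charSum_cone_zero_zero hL ht hψ, hsum, hcard']
  refine ⟨by ring, fun a b hab => ?_⟩
  rcases eq_or_ne b 0 with rfl | hb
  · have ha : a ≠ 0 := fun ha => hab (by rw [ha])
    rw [charSum_cone_zero_right hL ht hψ ha, hsum, hcard']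
    refine (hinfty _ (quadChar_dichotomy ha)).imp ?_ ?_ <;> intro h <;> linear_combination h / 2
  · obtain ⟨c, rfl⟩ : ∃ c, a = -(b * c) :=
      ⟨-(a / b), by rw [mul_neg, neg_neg, mul_div_cancel₀ a hb]⟩
    rw [charSum_cone_of_ne_zero hL ht hψ hb, hsum, hcard']
    refine (hfinite _ (quadChar_dichotomy hb) c).imp ?_ ?_ <;> intro h <;>
      linear_combination h / 2

variable {K : Type} [Field K] [Fintype K] [CharP K p] [Algebra K L]

theorem gaussSum_quadChar_psiChar (hK : ringChar K ≠ 2) (h2 : Module.finrank K L = 2) :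
    gaussSum (quadChar L) (psiChar p L) = -quadChar K (-1) * (Fintype.card K : ℂ) := by
  rw [psiChar_eq_comp_trace p K L, gaussSum_quadChar_comp_trace hK h2 (psiChar_ne_one p K)]

omit [CharP K p] [Algebra K L] in
theorem mul_neg_quadChar_neg_one_mul (s x y : ℂ) :
    s * (-quadChar K (-1) * x) * (-quadChar K (-1) * x * y) = x ^ 2 * (s * y) := by
  linear_combination s * x ^ 2 * y * quadChar_neg_one_sq K

theorem isTypeQ_cone_sdiff (hK : ringChar K ≠ 2) (h2 : Module.finrank K L = 2)
    (hq : Fintype.card K = q) {a b : L} (ha : quadChar L a = 1) (hb : quadChar L b = -1) :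
    IsTypeQ p q L (cone (traceSquareSet K a \ traceSquareSet K b)
      (traceSquareSet K b \ traceSquareSet K a) (quadChar K (-1))) := by
  classical
  have hcard : Fintype.card L = q ^ 2 := by rw [Module.card_eq_pow_finrank (K := K), h2, hq]
  have hab : quadChar L a * quadChar L b = -1 := by rw [ha, hb, one_mul]
  have ha0 := ne_zero_of_quadChar_eq_one ha
  have hb0 := ne_zero_of_quadChar_eq_neg_one hb
  have hσ := quadChar_neg_one_sq K
  refine isTypeQ_cone (by rwa [← Algebra.ringChar_eq K L])
    (hq ▸ Nat.odd_iff.2 (FiniteField.odd_card_of_char_ne_two hK)) hcard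
    (by linear_combination quadChar K (-1) * hσ) ?_ (fun s _ => Or.inl ?_) fun s hs c => ?_
  · simp only [indicator_sdiff_add_indicator_sdiff, Finset.sum_add_distrib, Finset.sum_sub_distrib,
      ← Finset.mul_sum, sum_indicator_traceSquareSet hK h2 ha0,
      sum_indicator_traceSquareSet hK h2 hb0, sum_indicator_traceSquareSet_mul hK h2 hab, hq, hσ]
    ring
  · simp only [indicator_sdiff_sub_indicator_sdiff, Finset.sum_sub_distrib,
      sum_indicator_traceSquareSet hK h2 ha0, sum_indicator_traceSquareSet hK h2 hb0, hσ]
    ring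
  · rw [gaussSum_quadChar_psiChar hK h2, sum_traceSquareSet_sdiff_mul_quadChar_sub hK h2 ha hb, hq,
      add_sub_cancel, mul_neg_quadChar_neg_one_mul, ← mul_add]
    exact (indicator_sdiff_add_mul_eq_one_or_neg_one _ _ _ hs).imp
      (fun h => by rw [h, mul_one]) fun h => by rw [h, mul_neg_one]

theorem isTypeQ_cone_inter (hK : ringChar K ≠ 2) (h2 : Module.finrank K L = 2)
    (hq : Fintype.card K = q) {a b : L} (ha : quadChar L a = 1) (hb : quadChar L b = -1) :
    IsTypeQ p q L (cone (traceSquareSet K a ∩ traceSquareSet K b)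
      (traceSquareSet K a ∪ traceSquareSet K b)ᶜ 0) := by
  classical
  have hcard : Fintype.card L = q ^ 2 := by rw [Module.card_eq_pow_finrank (K := K), h2, hq]
  have hab : quadChar L a * quadChar L b = -1 := by rw [ha, hb, one_mul]
  have ha0 := ne_zero_of_quadChar_eq_one ha
  have hb0 := ne_zero_of_quadChar_eq_neg_one hb
  refine isTypeQ_cone (by rwa [← Algebra.ringChar_eq K L])
    (hq ▸ Nat.odd_iff.2 (FiniteField.odd_card_of_char_ne_two hK)) hcard
    (zero_pow three_ne_zero) ?_ (fun s hs => ?_) fun s hs c => ?_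
  · simp only [indicator_inter_add_indicator_compl_union, Finset.sum_add_distrib,
      Finset.sum_sub_distrib, ← Finset.mul_sum, sum_indicator_traceSquareSet hK h2 ha0,
      sum_indicator_traceSquareSet hK h2 hb0, sum_indicator_traceSquareSet_mul hK h2 hab, hq,
      Finset.sum_const, Finset.card_univ, hcard, nsmul_eq_mul, Nat.cast_pow]
    ring
  · rw [gaussSum_quadChar_psiChar hK h2, sum_traceSquareSet_inter_sub_compl_union hK h2 ha0 hb0, hq]
    rcases quadChar_dichotomy (F := K) (neg_ne_zero.2 one_ne_zero) with h | h <;>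
      rcases hs with rfl | rfl <;> rw [h] <;> ring_nf <;> simp
  · rw [gaussSum_quadChar_psiChar hK h2, sum_traceSquareSet_inter_mul_quadChar_sub hK h2 ha hb, hq,
      zero_add, mul_neg_quadChar_neg_one_mul, ← mul_add]
    exact (indicator_inter_add_mul_eq_one_or_neg_one _ _ _ hs).imp
      (fun h => by rw [h, mul_one]) fun h => by rw [h, mul_neg_one]

end TypeQ

section Spread

variable {F : Type*} [Field F]

/-- The line `K_y` of slope `y` of the Desarguesian spread of `F × F`. -/
def spreadLine (y : F) : Set (F × F) :=
  {w | ∃ x, w = (x, x * y)}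

theorem forall_prod_iff_forall_line {P : F × F → Prop} :
    (∀ w, P w) ↔ (∀ z, P (0, z)) ∧ ∀ x ≠ 0, ∀ y, P (x, x * y) := by
  refine ⟨fun h => ⟨fun z => h _, fun x _ y => h _⟩, fun ⟨h0, h1⟩ ⟨x, z⟩ => ?_⟩
  rcases eq_or_ne x 0 with rfl | hx
  · exact h0 z
  · rw [← mul_div_cancel₀ z hx]
    exact h1 x hx _

theorem zero_mk_mem_iUnion_spreadLine_iff {S : Set F} {z : F} :
    ((0 : F), z) ∈ ⋃ y ∈ S, spreadLine y ↔ S.Nonempty ∧ z = 0 := by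
  simp [spreadLine, Set.Nonempty]

theorem mk_mul_mem_iUnion_spreadLine_iff {S : Set F} {x y : F} (hx : x ≠ 0) :
    (x, x * y) ∈ ⋃ y' ∈ S, spreadLine y' ↔ y ∈ S := by
  simp [spreadLine, hx]

variable [Fintype F] {A B A' B' : Set F} {t t' : ℂ}

theorem disjoint_cone (hA : Disjoint A A') (hB : Disjoint B B')
    (ht : Disjoint (quadClass F t) (quadClass F t')) :
    Disjoint (cone A B t) (cone A' B' t') := by
  rw [Set.disjoint_left] at hA hB ht ⊢
  refine forall_prod_iff_forall_line.2 ⟨fun z => ?_, fun x hx y => ?_⟩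
  · simpa only [zero_mk_mem_cone_iff] using @ht z
  · rw [mk_mul_mem_cone_iff hx, mk_mul_mem_cone_iff hx]
    rintro (⟨hη, hy⟩ | ⟨hη, hy⟩) (⟨hη', hy'⟩ | ⟨hη', hy'⟩)
    · exact hA hy hy'
    · norm_num [hη] at hη'
    · norm_num [hη] at hη'
    · exact hB hy hy'

theorem disjoint_four_cones (A B : Set F) (ht : t ≠ 0) :
    Disjoint (cone (A \ B) (B \ A) t) (cone (A ∩ B) (A ∪ B)ᶜ 0) ∧
    Disjoint (cone (A \ B) (B \ A) t) (cone (B \ A) (A \ B) (-t)) ∧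
    Disjoint (cone (A \ B) (B \ A) t) (cone (A ∪ B)ᶜ (A ∩ B) 0) ∧
    Disjoint (cone (A ∩ B) (A ∪ B)ᶜ 0) (cone (B \ A) (A \ B) (-t)) ∧
    Disjoint (cone (A ∩ B) (A ∪ B)ᶜ 0) (cone (A ∪ B)ᶜ (A ∩ B) 0) ∧
    Disjoint (cone (B \ A) (A \ B) (-t)) (cone (A ∪ B)ᶜ (A ∩ B) 0) := by
  have h₁₂ : Disjoint (A \ B) (B \ A) := disjoint_sdiff_sdiff
  have h₁₃ : Disjoint (A \ B) (A ∩ B) := disjoint_inf_sdiff.symm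
  have h₂₃ : Disjoint (B \ A) (A ∩ B) := Set.inter_comm B A ▸ disjoint_inf_sdiff.symm
  have h₁₄ : Disjoint (A \ B) (A ∪ B)ᶜ :=
    disjoint_compl_right.mono_left (Set.sdiff_subset.trans Set.subset_union_left)
  have h₂₄ : Disjoint (B \ A) (A ∪ B)ᶜ :=
    disjoint_compl_right.mono_left (Set.sdiff_subset.trans Set.subset_union_right)
  have h₃₄ : Disjoint (A ∩ B) (A ∪ B)ᶜ :=
    disjoint_compl_right.mono_left (Set.inter_subset_left.trans Set.subset_union_left)
  have ht₀ : Disjoint (quadClass F t) (quadClass F 0) := disjoint_quadClass ht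
  have hnt₀ : Disjoint (quadClass F (-t)) (quadClass F 0) := disjoint_quadClass (neg_ne_zero.2 ht)
  exact ⟨disjoint_cone h₁₃ h₂₄ ht₀,
    disjoint_cone h₁₂ h₁₂.symm (disjoint_quadClass (self_ne_neg.2 ht)),
    disjoint_cone h₁₄ h₂₃ ht₀,
    disjoint_cone h₂₃.symm h₁₄.symm hnt₀.symm,
    disjoint_cone h₃₄ h₃₄.symm (by rw [quadClass_zero]; exact disjoint_bot_left),
    disjoint_cone h₂₄ h₁₃ hnt₀⟩

theorem mk_mul_mem_cone_union_cone_iff {x y : F} (hx : x ≠ 0) :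
    (x, x * y) ∈ cone A B t ∪ cone B A t' ∪ {((0 : F), (0 : F))} ↔ y ∈ A ∪ B := by
  simp only [Set.mem_union, Set.mem_singleton_iff, mk_mul_mem_cone_iff hx, Prod.mk.injEq, hx,
    false_and, or_false]
  rcases quadChar_dichotomy hx with h | h <;> rw [h] <;> norm_num [or_comm]

theorem cone_union_cone_neg (ht : t = 1 ∨ t = -1) :
    cone A B t ∪ cone B A (-t) ∪ {((0 : F), (0 : F))} =
      (⋃ y ∈ A ∪ B, spreadLine y) ∪ {w | ∃ x, w = (0, x)} := by
  refine Set.ext (forall_prod_iff_forall_line.2 ⟨fun z => ?_, fun x hx y => ?_⟩)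
  · refine iff_of_true ?_ (Or.inr ⟨z, rfl⟩)
    rcases eq_or_ne z 0 with rfl | hz
    · exact Or.inr rfl
    · left
      rw [Set.mem_union, zero_mk_mem_cone_iff, zero_mk_mem_cone_iff]
      rcases ht with rfl | rfl <;> rcases quadChar_dichotomy hz with h | h <;>
        simp [quadClass, hz, h]
  · rw [mk_mul_mem_cone_union_cone_iff hx, Set.mem_union _ (⋃ _, _),
      mk_mul_mem_iUnion_spreadLine_iff hx, or_iff_left]
    rintro ⟨z, h⟩
    exact hx (congrArg Prod.fst h)

theorem cone_zero_union_cone_zero (h : (A ∪ B).Nonempty) :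
    cone A B 0 ∪ cone B A 0 ∪ {((0 : F), (0 : F))} = ⋃ y ∈ A ∪ B, spreadLine y := by
  refine Set.ext (forall_prod_iff_forall_line.2 ⟨fun z => ?_, fun x hx y => ?_⟩)
  · rw [zero_mk_mem_iUnion_spreadLine_iff, and_iff_right h, Set.mem_union, Set.mem_union,
      zero_mk_mem_cone_iff, zero_mk_mem_cone_iff, quadClass_zero]
    simp
  · rw [mk_mul_mem_cone_union_cone_iff hx, mk_mul_mem_iUnion_spreadLine_iff hx]

theorem cone_zero :
    cone A B 0 = {w | ∃ x ∈ quadClass F 1, ∃ y ∈ A, w = (x, x * y)} ∪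
      {w | ∃ x ∈ quadClass F (-1), ∃ y ∈ B, w = (x, x * y)} := by
  simp [cone, quadClass_zero]

end Spread

section Chen

theorem univ_sdiff_sdiff_union_sdiff_union_inter {α : Type*} (A B : Set α) :
    Set.univ \ (A \ B ∪ B \ A ∪ A ∩ B) = (A ∪ B)ᶜ := by
  rw [← Set.compl_eq_univ_sdiff]
  exact congrArg _ (symmDiff_sup_inf A B)

theorem finrank_eq_two_of_card_eq_sq {K L : Type*} [Field K] [Fintype K] [Field L] [Fintype L]
    [Algebra K L] (h : Fintype.card L = Fintype.card K ^ 2) : Module.finrank K L = 2 :=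
  Nat.pow_right_injective Fintype.one_lt_card (Module.card_eq_pow_finrank.symm.trans h)

variable {K L : Type} [Field K] [Fintype K] [Field L] [Algebra K L] {ω : L}

theorem setOf_trace_mem_sqSet :
    {x : L | Algebra.trace K L x ∈ sqSet K} = traceSquareSet K 1 := by
  simp only [traceSquareSet, sqSet_eq_quadClass_one, mul_one]

theorem setOf_trace_mem_sqSet_mul (hω : ω ≠ 0) :
    {y : L | ∃ x : L, Algebra.trace K L x ∈ sqSet K ∧ y = x * ω} = traceSquareSet K ω⁻¹ := by
  ext y
  simp only [traceSquareSet, sqSet_eq_quadClass_one, Set.mem_ofPred_eq]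
  constructor
  · rintro ⟨x, hx, rfl⟩
    rwa [mul_inv_cancel_right₀ hω]
  · exact fun h => ⟨y * ω⁻¹, h, (inv_mul_cancel_right₀ hω y).symm⟩

variable {p q : ℕ} [Fact p.Prime] [CharP K p] [Fintype L] [CharP L p]

theorem isTypeQ_four_cones (hK : ringChar K ≠ 2) (h2 : Module.finrank K L = 2)
    (hq : Fintype.card K = q) {a b : L} (ha : quadChar L a = 1) (hb : quadChar L b = -1) :
    IsTypeQ p q L (cone (traceSquareSet K a \ traceSquareSet K b)
        (traceSquareSet K b \ traceSquareSet K a) (quadChar K (-1))) ∧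
      IsTypeQ p q L (cone (traceSquareSet K a ∩ traceSquareSet K b)
        (traceSquareSet K a ∪ traceSquareSet K b)ᶜ 0) ∧
      IsTypeQ p q L (cone (traceSquareSet K b \ traceSquareSet K a)
        (traceSquareSet K a \ traceSquareSet K b) (-quadChar K (-1))) ∧
      IsTypeQ p q L (cone (traceSquareSet K a ∪ traceSquareSet K b)ᶜ
        (traceSquareSet K a ∩ traceSquareSet K b) 0) := by
  have hL : ringChar L ≠ 2 := by rwa [← Algebra.ringChar_eq K L]
  have hodd : Odd q := hq ▸ Nat.odd_iff.2 (FiniteField.odd_card_of_char_ne_two hK)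
  have h₀ := isTypeQ_cone_sdiff (p := p) hK h2 hq ha hb
  have h₁ := isTypeQ_cone_inter (p := p) hK h2 hq ha hb
  refine ⟨h₀, h₁, h₀.cone_swap hL hodd ?_, ?_⟩
  · linear_combination quadChar K (-1) * quadChar_neg_one_sq K
  · simpa only [neg_zero] using h₁.cone_swap hL hodd (zero_pow three_ne_zero)

end Chen

/-- Chen's construction: the four sets `C₀, C₁, C₂, C₃` are of type Q, pairwise
disjoint, and fit the spread `{K_y} ∪ {K_∞}`. -/
theorem chen_typeQ_construction
    (p s q : ℕ) (hp : p.Prime) (hpodd : p ≠ 2) (hs : 0 < s) (hq : q = p ^ s)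
    (K L : Type) [Field K] [Fintype K] [Field L] [Fintype L] [Algebra K L] [CharP L p]
    (hK : Fintype.card K = q) (hL : Fintype.card L = q ^ 2)
    (ω : L) (hω : IsPrim L ω)
    (X X' X₁ X₂ X₃ X₄ : Set L)
    (hX : X = {x : L | Algebra.trace K L x ∈ sqSet K})
    (hX' : X' = {y : L | ∃ x : L, Algebra.trace K L x ∈ sqSet K ∧ y = x * ω})
    (hX₁ : X₁ = X \ (X ∩ X')) (hX₂ : X₂ = X' \ (X ∩ X'))
    (hX₃ : X₃ = X ∩ X') (hX₄ : X₄ = Set.univ \ (X₁ ∪ X₂ ∪ X₃))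
    (τ : ℕ) (hτ : τ = if q % 4 = 1 then 0 else 1)
    (C₀ C₁ C₂ C₃ : Set (L × L))
    (hC₀ : C₀ = {w | ∃ x ∈ cyc L ω 2 0, ∃ y ∈ X₁, w = (x, x * y)} ∪
      {w | ∃ x ∈ cyc L ω 2 1, ∃ y ∈ X₂, w = (x, x * y)} ∪
      {w | ∃ x ∈ cyc L ω 2 τ, w = ((0 : L), x)})
    (hC₁ : C₁ = {w | ∃ x ∈ cyc L ω 2 0, ∃ y ∈ X₃, w = (x, x * y)} ∪
      {w | ∃ x ∈ cyc L ω 2 1, ∃ y ∈ X₄, w = (x, x * y)})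
    (hC₂ : C₂ = {w | ∃ x ∈ cyc L ω 2 1, ∃ y ∈ X₁, w = (x, x * y)} ∪
      {w | ∃ x ∈ cyc L ω 2 0, ∃ y ∈ X₂, w = (x, x * y)} ∪
      {w | ∃ x ∈ cyc L ω 2 (τ + 1), w = ((0 : L), x)})
    (hC₃ : C₃ = {w | ∃ x ∈ cyc L ω 2 1, ∃ y ∈ X₃, w = (x, x * y)} ∪
      {w | ∃ x ∈ cyc L ω 2 0, ∃ y ∈ X₄, w = (x, x * y)})
    (Ky : L → Set (L × L)) (hKy : ∀ y, Ky y = {w | ∃ x : L, w = (x, x * y)})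
    (Kinf : Set (L × L)) (hKinf : Kinf = {w | ∃ x : L, w = ((0 : L), x)}) :
    (IsTypeQ p q L C₀ ∧ IsTypeQ p q L C₁ ∧ IsTypeQ p q L C₂ ∧ IsTypeQ p q L C₃) ∧
    (Disjoint C₀ C₁ ∧ Disjoint C₀ C₂ ∧ Disjoint C₀ C₃ ∧
      Disjoint C₁ C₂ ∧ Disjoint C₁ C₃ ∧ Disjoint C₂ C₃) ∧
    C₀ ∪ C₂ ∪ {((0 : L), (0 : L))} = (⋃ y ∈ X₁ ∪ X₂, Ky y) ∪ Kinf ∧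
    C₁ ∪ C₃ ∪ {((0 : L), (0 : L))} = ⋃ y ∈ X₃ ∪ X₄, Ky y := by
  have := Fact.mk hp
  have : CharP K p := (RingHom.charP_iff _ (algebraMap K L).injective p).2 ‹_›
  have hK2 : ringChar K ≠ 2 := by rwa [ringChar.eq K p]
  have hL2 : ringChar L ≠ 2 := by rwa [ringChar.eq L p]
  have h2 : Module.finrank K L = 2 := finrank_eq_two_of_card_eq_sq (by rw [hL, hK])
  have hη : quadChar L ω = -1 := quadChar_eq_neg_one_of_isPrim hL2 hω
  have hη' : quadChar L ω⁻¹ = -1 := by rw [quadChar_inv, hη]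
  have hσ : (-1 : ℂ) ^ τ = quadChar K (-1) := by rw [hτ, ← hK, neg_one_pow_eq_quadChar_neg_one hK2]
  rw [setOf_trace_mem_sqSet] at hX
  rw [setOf_trace_mem_sqSet_mul (ne_zero_of_quadChar_eq_neg_one hη)] at hX'
  rw [Set.sdiff_self_inter] at hX₁
  rw [Set.inter_comm, Set.sdiff_self_inter] at hX₂
  rw [hX₁, hX₂, hX₃, univ_sdiff_sdiff_union_sdiff_union_inter] at hX₄
  simp only [cyc_two_eq_quadClass hL2 hω, pow_zero, pow_succ, mul_neg_one, hσ]
    at hC₀ hC₁ hC₂ hC₃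
  rw [Set.union_comm {w | ∃ x ∈ quadClass L (-1), _}] at hC₂ hC₃
  rw [← cone_zero] at hC₁ hC₃
  obtain rfl : Ky = spreadLine := funext hKy
  subst hX hX' hX₁ hX₂ hX₃ hX₄ hC₀ hC₁ hC₂ hC₃ hKinf
  exact ⟨isTypeQ_four_cones hK2 h2 hK (map_one _) hη',
    disjoint_four_cones _ _ (hσ ▸ pow_ne_zero τ (neg_ne_zero.2 one_ne_zero)),
    cone_union_cone_neg (hσ ▸ neg_one_pow_eq_or ℂ τ),
    cone_zero_union_cone_zero ⟨0, Or.inr (by simp [zero_notMem_traceSquareSet])⟩⟩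

end
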